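/- For the function A(y,μ) = (e^{−μ³/6}/3^{(y+1)/3})·Σ_{k≥0} ((1/2)·3^{2/3}·μ)^k / (k!·Γ((y+1−2k)/3)), the limit as μ → −∞ of A(y,μ)·|μ|^{y−1/2} equals 1/√(2π), for any fixed real y. -/

import Mathlib

/-!
The proof is the method of steepest descent applied to a contour integral for `A`.

On a vertical line `t = c + i w`, `c > 0`, one has for every real `s`
`∫ exp (t³ / 3) t ^ s dw = 2π 3 ^ ((s - 2) / 3) / Γ ((2 - s) / 3)` (`integral_airyKer`). This is
Hankel's formula for `1 / Γ` in the variable `t³ / 3`; in this variable the vertical line already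
gives Gaussian decay. For `s ≤ 0` it is proved by multiplying the integral with Euler's integral
`∫ exp (-x) x ^ ((2 - s) / 3 - 1) dx`. By Cauchy's theorem the line may be placed at
`c = (3x) ^ (1/3) / 2`, depending on `x`; after rescaling and Fubini the `x`-integral is elementary
and leaves `∫ τ ^ s / (1 - τ³) dw` over `re τ = 1/2`, which only sees the pole at `τ = 1`
(`integral_cpow_div`). Integration by parts relates `s + 3` to `s` and extends the formula to all
real `s`.

For `μ = -m < 0`, summing over `k` on the line `re t = m` identifies the series with the integral
of `exp (t³ / 3 - m t² / 2) t ^ (1 - y)` (`hasSum_integral_airyKer`). The point `t = m` is the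
saddle, its exponential value cancels the prefactor `exp (m³ / 6)`, and substituting
`w = m ^ (-1/2) u` gives
`2π A(y, -m) m ^ (y - 1/2) = ∫ exp (-u² / 2 - i h u³ / 3) (1 + i h u) ^ (1 - y) du`
with `h = m ^ (-3/2)` (`AiryA_neg_mul_rpow`). Dominated convergence as `h → 0` yields `√(2π)`.
-/

open Real Filter

/-- `A(y,μ) = (e^{−μ³/6}/3^{(y+1)/3})·Σ_{k≥0} ((1/2)·3^{2/3}·μ)^k/(k!·Γ((y+1−2k)/3))`.
Here `Real.Gamma` vanishes at nonpositive integers, so `1/Γ = 0` there. -/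
noncomputable def AiryA (y μ : ℝ) : ℝ :=
  (Real.exp (-μ ^ 3 / 6) / (3 : ℝ) ^ ((y + 1) / 3)) *
    ∑' k : ℕ, ((1 / 2) * (3 : ℝ) ^ (2 / 3 : ℝ) * μ) ^ k /
      ((k.factorial : ℝ) * Real.Gamma ((y + 1 - 2 * k) / 3))

open MeasureTheory Topology

/-! ### Moving vertical contours -/

theorem re_line (c w : ℝ) : ((c : ℂ) + w * Complex.I).re = c := by simp

theorem im_line (c w : ℝ) : ((c : ℂ) + w * Complex.I).im = w := by simp

theorem normSq_line (c w : ℝ) : ‖(c : ℂ) + w * Complex.I‖ ^ 2 = c ^ 2 + w ^ 2 := by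
  rw [Complex.sq_norm, Complex.normSq_add_mul_I]

/-- The quadratic decay is only required away from the real axis, so that the bound can be applied
to functions with a removable singularity on it. -/
theorem integrable_line {f : ℂ → ℂ} (hf : DifferentiableOn ℂ f {z | 0 < z.re}) {c C : ℝ}
    (hc : 0 < c) (hC : ∀ z : ℂ, z.re = c → 1 ≤ |z.im| → ‖f z‖ ≤ C / z.im ^ 2) :
    Integrable fun w : ℝ => f (c + w * Complex.I) := by
  have hcont : Continuous fun w : ℝ => f (c + w * Complex.I) :=
    hf.continuousOn.comp_continuous (by fun_prop) (fun w => by simpa using hc)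
  have key : ∀ w : ℝ, 1 ≤ |w| →
      ‖f (c + w * Complex.I)‖ ≤ (2 * C) * ‖(1 + w ^ 2)⁻¹‖ := by
    intro w hw
    have h1 := hC (c + w * Complex.I) (by simp) (by simpa using hw)
    rw [im_line] at h1
    have hw2 : 1 ≤ w ^ 2 := by rw [← sq_abs]; nlinarith
    have hC0 : 0 ≤ C := by
      have := (norm_nonneg _).trans h1
      by_contra! hneg
      have : C / w ^ 2 < 0 := div_neg_of_neg_of_pos hneg (by linarith)
      linarith
    rw [Real.norm_of_nonneg (by positivity), ← div_eq_mul_inv]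
    refine h1.trans ?_
    rw [div_le_div_iff₀ (by linarith) (by positivity)]
    nlinarith
  refine (hcont.locallyIntegrable).integrable_of_isBigO_atBot_atTop
    (g := fun w : ℝ => (1 + w ^ 2)⁻¹) (g' := fun w : ℝ => (1 + w ^ 2)⁻¹) ?_ ?_ ?_ ?_
  · refine Asymptotics.IsBigO.of_bound (2 * C) ?_
    filter_upwards [eventually_le_atBot (-1)] with w hw
    exact key w (by rw [abs_of_neg] <;> linarith)
  · exact integrable_inv_one_add_sq.integrableAtFilter _
  · refine Asymptotics.IsBigO.of_bound (2 * C) ?_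
    filter_upwards [eventually_ge_atTop 1] with w hw
    exact key w (by rw [abs_of_pos] <;> linarith)
  · exact integrable_inv_one_add_sq.integrableAtFilter _

/-- Cauchy's theorem on a vertical strip: the horizontal sides of the rectangle of height `2T`
contribute `O(T⁻²)`. -/
theorem integral_line_eq {f : ℂ → ℂ} (hf : DifferentiableOn ℂ f {z | 0 < z.re}) {a b C : ℝ}
    (ha : 0 < a) (hb : 0 < b)
    (hC : ∀ z : ℂ, z.re ∈ Set.uIcc a b → 1 ≤ |z.im| → ‖f z‖ ≤ C / z.im ^ 2) :
    ∫ w : ℝ, f (a + w * Complex.I) = ∫ w : ℝ, f (b + w * Complex.I) := by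
  have hIa := integrable_line hf ha (fun z hz => hC z (by rw [hz]; exact Set.left_mem_uIcc))
  have hIb := integrable_line hf hb (fun z hz => hC z (by rw [hz]; exact Set.right_mem_uIcc))
  have hTa := intervalIntegral_tendsto_integral hIa tendsto_neg_atTop_atBot tendsto_id
  have hTb := intervalIntegral_tendsto_integral hIb tendsto_neg_atTop_atBot tendsto_id
  have hpos : ∀ x ∈ Set.uIcc a b, 0 < x := fun x hx =>
    lt_of_lt_of_le (lt_min ha hb) hx.1
  have hbd : ∀ T : ℝ, 1 ≤ |T| →
      ‖∫ x in a..b, f (x + T * Complex.I)‖ ≤ C / T ^ 2 * |b - a| := by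
    intro T hT
    refine intervalIntegral.norm_integral_le_of_norm_le_const fun x hx => ?_
    have := hC (x + T * Complex.I) (by simpa using Set.uIoc_subset_uIcc hx) (by simpa using hT)
    simpa using this
  have hlim : Tendsto (fun T : ℝ => C / T ^ 2 * |b - a|) atTop (𝓝 0) := by
    have : Tendsto (fun T : ℝ => C / T ^ 2) atTop (𝓝 0) :=
      tendsto_const_nhds.div_atTop (tendsto_pow_atTop two_ne_zero)
    simpa using this.mul_const |b - a|
  have htop : Tendsto (fun T : ℝ => ∫ x in a..b, f (x + T * Complex.I)) atTop (𝓝 0) := by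
    refine squeeze_zero_norm' ?_ hlim
    filter_upwards [eventually_ge_atTop 1] with T hT
    exact hbd T (by rw [abs_of_pos] <;> linarith)
  have hbot : Tendsto (fun T : ℝ => ∫ x in a..b, f (x + (-T : ℝ) * Complex.I)) atTop (𝓝 0) := by
    refine squeeze_zero_norm' ?_ hlim
    filter_upwards [eventually_ge_atTop 1] with T hT
    have := hbd (-T) (by rw [abs_neg, abs_of_pos] <;> linarith)
    simpa using this
  have hrect : ∀ T : ℝ, (∫ w in (-T)..T, f (b + w * Complex.I)) -
      (∫ w in (-T)..T, f (a + w * Complex.I)) =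
      Complex.I * ((∫ x in a..b, f (x + (-T : ℝ) * Complex.I)) -
        ∫ x in a..b, f (x + T * Complex.I)) := by
    intro T
    have h := Complex.integral_boundary_rect_eq_zero_of_differentiableOn f
      (a + (-T : ℝ) * Complex.I) (b + T * Complex.I) (by
        refine hf.mono fun z hz => ?_
        have := hz.1
        simp only [re_line, Set.mem_preimage] at this
        exact hpos _ this)
    simp only [re_line, im_line, smul_eq_mul] at h
    linear_combination (-Complex.I) * h +
      ((∫ w in (-T)..T, f (b + w * Complex.I)) - (∫ w in (-T)..T, f (a + w * Complex.I))) *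
        Complex.I_sq
  have h1 := hTb.sub hTa
  have h2 := (hbot.sub htop).const_mul Complex.I
  simp only [id, hrect] at h1
  have := tendsto_nhds_unique h1 h2
  simp only [sub_zero, mul_zero] at this
  exact (sub_eq_zero.mp this).symm

/-! ### The pole contribution -/

/-- Subtracting `1 / (3 τ (1 - τ))`, whose
integral over `re τ = 1/2` is elementary, removes the pole at `τ = 1`; what is left is holomorphic
on `0 < re τ` and `O(|τ|⁻²)`, so its integral vanishes on pushing the line to the right. -/
theorem integral_cpow_div {s : ℝ} (hs : s ≤ 0) :
    ∫ w : ℝ, ((1 / 2 : ℝ) + w * Complex.I) ^ (s : ℂ) / (1 - ((1 / 2 : ℝ) + w * Complex.I) ^ 3)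
      = ((2 * Real.pi / 3 : ℝ) : ℂ) := by
  set U : Set ℂ := {z | 0 < z.re} with hU
  have hUo : IsOpen U := isOpen_lt continuous_const Complex.continuous_re
  set f : ℂ → ℂ := fun z => 1 / (3 * z) - z ^ (s : ℂ) / (1 + z + z ^ 2) with hf
  have hz0 : ∀ z ∈ U, z ≠ 0 := by
    rintro z hz rfl
    simp [hU] at hz
  have hq : ∀ z ∈ U, ‖z‖ ≤ ‖1 + z + z ^ 2‖ := by
    intro z hz
    have h0 := hz0 z hz
    have hzr : 0 < z.re := hz
    have e : 1 + z + z ^ 2 = z * (1 + z + z⁻¹) := by field_simp; ring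
    rw [e, norm_mul]
    refine le_mul_of_one_le_right (norm_nonneg _) ?_
    refine le_trans ?_ (Complex.re_le_norm _)
    have : 0 ≤ (z⁻¹).re := by
      rw [Complex.inv_re]; exact div_nonneg hzr.le (Complex.normSq_nonneg _)
    simp only [Complex.add_re, Complex.one_re]
    linarith
  have hq0 : ∀ z ∈ U, 1 + z + z ^ 2 ≠ 0 := fun z hz h => by
    have := hq z hz
    rw [h, norm_zero] at this
    exact hz0 z hz (norm_le_zero_iff.mp this)
  have hfd : DifferentiableOn ℂ f U := by
    intro z hz
    refine DifferentiableAt.differentiableWithinAt ?_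
    refine DifferentiableAt.sub ?_ ?_
    · exact (differentiableAt_const _).div (by fun_prop) (by simpa using hz0 z hz)
    · refine DifferentiableAt.div ?_ (by fun_prop) (hq0 z hz)
      exact differentiableAt_id.cpow (differentiableAt_const _) (Or.inl hz)
  have hf1 : f 1 = 0 := by simp [hf]; norm_num
  set k := dslope f 1 with hk
  have hkd : DifferentiableOn ℂ k U :=
    (Complex.differentiableOn_dslope (hUo.mem_nhds (by simp [hU]))).mpr hfd
  have hk_eq : ∀ z, z ≠ 1 → k z = f z / (z - 1) := by
    intro z hz
    rw [hk, dslope_of_ne _ hz, slope_def_field, hf1, sub_zero]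
  set C : ℝ := 2 * (1 / 3 + (1 / 2 : ℝ) ^ s) with hCdef
  have hC0 : 0 ≤ C := by positivity
  -- Away from `τ = 1`, `k` is the quotient `f z / (z - 1)` with `f = O(1 / |z|)`.
  have hkb : ∀ z : ℂ, 1 / 2 ≤ z.re → 1 ≤ ‖z - 1‖ → ‖k z‖ ≤ C / ‖z‖ ^ 2 := by
    intro z hz hz1
    have hzU : z ∈ U := by simp only [hU, Set.mem_ofPred_eq]; linarith
    have hzn : 1 / 2 ≤ ‖z‖ := hz.trans (Complex.re_le_norm z)
    have hzp : 0 < ‖z‖ := by linarith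
    have hne : z ≠ 1 := by rintro rfl; simp at hz1; linarith
    have hfz : ‖f z‖ ≤ (1 / 3 + (1 / 2 : ℝ) ^ s) / ‖z‖ := by
      rw [add_div]
      refine (norm_sub_le _ _).trans (add_le_add (le_of_eq ?_) ?_)
      · simp; ring
      · rw [norm_div, Complex.norm_cpow_real]
        exact div_le_div₀ (by positivity)
          (Real.rpow_le_rpow_of_nonpos (by norm_num) hzn hs) hzp (hq z hzU)
    have h2 : ‖z‖ ≤ 2 * ‖z - 1‖ := by
      have := norm_add_le (z - 1) 1
      simp only [sub_add_cancel, norm_one] at this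
      linarith
    rw [hk_eq z hne, norm_div]
    calc ‖f z‖ / ‖z - 1‖ ≤ ((1 / 3 + (1 / 2 : ℝ) ^ s) / ‖z‖) / (‖z‖ / 2) :=
          div_le_div₀ (by positivity) hfz (by positivity) (by linarith)
      _ = C / ‖z‖ ^ 2 := by rw [hCdef]; field_simp
  have hkb' : ∀ z : ℂ, 1 / 2 ≤ z.re → 1 ≤ |z.im| → ‖k z‖ ≤ C / z.im ^ 2 := by
    intro z hz hz1
    refine (hkb z hz ?_).trans ?_
    · have := Complex.abs_im_le_norm (z - 1)
      simp at this; linarith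
    · have h1 : z.im ^ 2 ≤ ‖z‖ ^ 2 := by
        rw [← sq_abs]; exact pow_le_pow_left₀ (abs_nonneg _) (Complex.abs_im_le_norm z) 2
      have h2 : 0 < z.im ^ 2 := by rw [← sq_abs]; positivity
      exact div_le_div_of_nonneg_left hC0 h2 h1
  have hshift : ∀ b : ℝ, 2 ≤ b → ∫ w : ℝ, k ((1 / 2 : ℝ) + w * Complex.I) =
      ∫ w : ℝ, k (b + w * Complex.I) := by
    intro b hb
    refine integral_line_eq hkd (C := C) (by norm_num) (by linarith) fun z hz h1 => ?_
    rw [Set.uIcc_of_le (by linarith)] at hz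
    exact hkb' z hz.1 h1
  have hk0 : ∫ w : ℝ, k ((1 / 2 : ℝ) + w * Complex.I) = 0 := by
    have hlim : Tendsto (fun b : ℝ => ∫ w : ℝ, k (b + w * Complex.I)) atTop
        (𝓝 (∫ _ : ℝ, (0 : ℂ))) := by
      refine tendsto_integral_filter_of_dominated_convergence
        (fun w : ℝ => C * (1 + w ^ 2)⁻¹) ?_ ?_ ?_ ?_
      · filter_upwards [eventually_ge_atTop 2] with b hb
        refine (integrable_line hkd (C := C) (by linarith) fun z hz h1 => ?_).aestronglyMeasurable
        exact hkb' z (by linarith) h1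
      · filter_upwards [eventually_ge_atTop 2] with b hb
        refine Eventually.of_forall fun w => ?_
        refine (hkb _ (by rw [re_line]; linarith) ?_).trans ?_
        · have := Complex.re_le_norm ((b : ℂ) + w * Complex.I - 1)
          simp at this; linarith
        · rw [normSq_line, div_eq_mul_inv]
          gcongr
          nlinarith
      · exact integrable_inv_one_add_sq.const_mul C
      · refine Eventually.of_forall fun w => ?_
        have h0 : Tendsto (fun b : ℝ => C / b ^ 2) atTop (𝓝 0) :=
          tendsto_const_nhds.div_atTop (tendsto_pow_atTop two_ne_zero)
        refine squeeze_zero_norm' ?_ h0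
        filter_upwards [eventually_ge_atTop 2] with b hb
        refine (hkb _ (by rw [re_line]; linarith) ?_).trans ?_
        · have := Complex.re_le_norm ((b : ℂ) + w * Complex.I - 1)
          simp at this; linarith
        · rw [normSq_line]
          gcongr
          nlinarith [sq_nonneg w]
    rw [integral_zero] at hlim
    refine tendsto_nhds_unique (tendsto_const_nhds.congr' ?_) hlim
    filter_upwards [eventually_ge_atTop 2] with b hb
    exact hshift b hb
  have hkint : Integrable fun w : ℝ => k ((1 / 2 : ℝ) + w * Complex.I) :=
    integrable_line hkd (C := C) (by norm_num) fun z hz h1 => hkb' z (by linarith) h1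
  -- On `τ = 1/2 + i w` the product `τ (1 - τ)` is the real number `1/4 + w²`.
  have hbase : ∀ w : ℝ, (4 / 3 : ℝ) * (1 + (2 * w) ^ 2)⁻¹ = (1 / 3) / (1 / 4 + w ^ 2) := by
    intro w
    field_simp
    ring
  have hgint : Integrable fun w : ℝ => (4 / 3 : ℝ) * (1 + (2 * w) ^ 2)⁻¹ :=
    (integrable_inv_one_add_sq.comp_mul_left' two_ne_zero).const_mul _
  have hg : ∫ w : ℝ, (4 / 3 : ℝ) * (1 + (2 * w) ^ 2)⁻¹ = 2 * Real.pi / 3 := by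
    rw [integral_const_mul, Measure.integral_comp_mul_left (fun w : ℝ => (1 + w ^ 2)⁻¹) 2,
      integral_univ_inv_one_add_sq]
    simp; ring
  have hsplit : ∀ w : ℝ,
      ((1 / 2 : ℝ) + w * Complex.I) ^ (s : ℂ) / (1 - ((1 / 2 : ℝ) + w * Complex.I) ^ 3) =
      k ((1 / 2 : ℝ) + w * Complex.I) + ((4 / 3 : ℝ) * (1 + (2 * w) ^ 2)⁻¹ : ℝ) := by
    intro w
    have hzU : ((1 / 2 : ℝ) + w * Complex.I : ℂ) ∈ U := by simp [hU]
    have hone : ((1 / 2 : ℝ) + w * Complex.I : ℂ) - 1 ≠ 0 := fun h => by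
      have := congrArg Complex.re h
      simp at this; norm_num at this
    have hprod : (((1 / 3) / (1 / 4 + w ^ 2) : ℝ) : ℂ) =
        -(1 / 3) / (((1 / 2 : ℝ) + w * Complex.I) * (((1 / 2 : ℝ) + w * Complex.I) - 1)) := by
      have : (((1 / 2 : ℝ) + w * Complex.I) * (((1 / 2 : ℝ) + w * Complex.I) - 1) : ℂ) =
          -((1 / 4 + w ^ 2 : ℝ) : ℂ) := by
        push_cast
        linear_combination (w : ℂ) ^ 2 * Complex.I_sq
      rw [this]; push_cast; rw [neg_div_neg_eq]
    rw [hbase, hprod, hk_eq _ (sub_ne_zero.mp hone), hf]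
    have h0 := hz0 _ hzU
    have h1 := hq0 _ hzU
    generalize ((1 / 2 : ℝ) + w * Complex.I : ℂ) = z at *
    have hcub : 1 - z ^ 3 = -((z - 1) * (1 + z + z ^ 2)) := by ring
    rw [hcub]
    field_simp
    ring
  simp_rw [hsplit]
  have hgc : ∫ w : ℝ, (((4 / 3 : ℝ) * (1 + (2 * w) ^ 2)⁻¹ : ℝ) : ℂ) =
      ((2 * Real.pi / 3 : ℝ) : ℂ) := by
    rw [integral_complex_ofReal, hg]
  exact (integral_add hkint hgint.ofReal).trans (by rw [hk0, zero_add]; exact hgc)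

/-! ### The kernel on vertical lines -/

theorem norm_exp_cube_line (c w : ℝ) :
    ‖Complex.exp (((c : ℂ) + w * Complex.I) ^ 3 / 3)‖ = Real.exp (c ^ 3 / 3 - c * w ^ 2) := by
  rw [Complex.norm_exp]
  congr 1
  have : ((c : ℂ) + w * Complex.I) ^ 3 / 3 =
      ((c ^ 3 / 3 - c * w ^ 2 : ℝ) : ℂ) + ((c ^ 2 * w - w ^ 3 / 3 : ℝ) : ℂ) * Complex.I := by
    push_cast
    linear_combination ((c : ℂ) * w ^ 2 + w ^ 3 / 3 * Complex.I) * Complex.I_sq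
  rw [this, re_line]

theorem rpow_le_const_mul_exp_sq {c ε : ℝ} (hc : 0 < c) (hε : 0 < ε) (s : ℝ) :
    ∃ C : ℝ, 0 ≤ C ∧ ∀ x : ℝ, c ≤ x → x ^ s ≤ C * Real.exp (ε * x ^ 2) := by
  obtain ⟨N, hN⟩ := exists_nat_ge |s|
  refine ⟨c ^ s * (N.factorial / (c ^ (2 * N) * ε ^ N)), by positivity, fun x hx => ?_⟩
  have hx0 : 0 < x := hc.trans_le hx
  have h1 : (x / c) ^ s ≤ (x / c) ^ (2 * N) := by
    rw [← Real.rpow_natCast]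
    refine Real.rpow_le_rpow_of_exponent_le ((one_le_div hc).mpr hx) ?_
    push_cast
    linarith [le_abs_self s, abs_nonneg s]
  have h2 := Real.pow_div_factorial_le_exp (x := ε * x ^ 2) (by positivity) N
  have h3 : x ^ s = c ^ s * (x / c) ^ s := by
    rw [← Real.mul_rpow hc.le (by positivity)]
    congr 1
    field_simp
  have hf : (0 : ℝ) < N.factorial := by positivity
  rw [h3, mul_assoc]
  refine mul_le_mul_of_nonneg_left (h1.trans ?_) (by positivity)
  calc (x / c) ^ (2 * N)
      = N.factorial / (c ^ (2 * N) * ε ^ N) * ((ε * x ^ 2) ^ N / N.factorial) := by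
        rw [mul_pow, ← pow_mul, div_pow]; field_simp
    _ ≤ _ := mul_le_mul_of_nonneg_left h2 (by positivity)

theorem le_norm_line {c : ℝ} (w : ℝ) : c ≤ ‖(c : ℂ) + w * Complex.I‖ := by
  have := Complex.re_le_norm ((c : ℂ) + w * Complex.I)
  rwa [re_line] at this

theorem line_ne_zero {c : ℝ} (hc : 0 < c) (w : ℝ) : (c : ℂ) + w * Complex.I ≠ 0 := by
  rw [← norm_pos_iff]
  exact hc.trans_le (le_norm_line w)

theorem line_mem_slitPlane {c : ℝ} (hc : 0 < c) (w : ℝ) :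
    (c : ℂ) + w * Complex.I ∈ Complex.slitPlane := Or.inl (by rw [re_line]; exact hc)

theorem continuous_line_cpow {c : ℝ} (hc : 0 < c) (s : ℂ) :
    Continuous fun w : ℝ => ((c : ℂ) + w * Complex.I) ^ s :=
  Continuous.cpow (by fun_prop) continuous_const (line_mem_slitPlane hc)

theorem integrable_gaussian_mul_norm_rpow {c β : ℝ} (hc : 0 < c) (hβ : 0 < β) (s : ℝ) :
    Integrable fun w : ℝ => Real.exp (-β * w ^ 2) * ‖(c : ℂ) + w * Complex.I‖ ^ s := by
  obtain ⟨C, hC0, hC⟩ := rpow_le_const_mul_exp_sq hc (half_pos hβ) s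
  refine ((integrable_exp_neg_mul_sq (half_pos hβ)).const_mul
    (C * Real.exp (β / 2 * c ^ 2))).mono' ?_ (Eventually.of_forall fun w => ?_)
  · refine Continuous.aestronglyMeasurable ?_
    refine Continuous.mul (by fun_prop) (Continuous.rpow_const (by fun_prop) fun w => Or.inl ?_)
    exact norm_ne_zero_iff.mpr (line_ne_zero hc w)
  · rw [Real.norm_of_nonneg (by positivity)]
    have := hC _ (le_norm_line w)
    rw [normSq_line] at this
    calc _ ≤ Real.exp (-β * w ^ 2) * (C * Real.exp (β / 2 * (c ^ 2 + w ^ 2))) :=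
          mul_le_mul_of_nonneg_left this (Real.exp_nonneg _)
      _ = C * (Real.exp (-β * w ^ 2) * Real.exp (β / 2 * (c ^ 2 + w ^ 2))) := by ring
      _ = C * (Real.exp (β / 2 * c ^ 2) * Real.exp (-(β / 2) * w ^ 2)) := by
          rw [← Real.exp_add, ← Real.exp_add]; congr 2; ring
      _ = _ := by ring

/-- The kernel `exp (t³ / 3) t ^ s`, whose integral over a vertical line is, up to
elementary factors, Hankel's integral for `1 / Γ` in the variable `σ = t³ / 3`. -/
noncomputable def airyKer (s : ℝ) (t : ℂ) : ℂ := Complex.exp (t ^ 3 / 3) * t ^ (s : ℂ)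

theorem norm_airyKer_line (s c w : ℝ) :
    ‖airyKer s (c + w * Complex.I)‖ =
      Real.exp (c ^ 3 / 3) * (Real.exp (-c * w ^ 2) * ‖(c : ℂ) + w * Complex.I‖ ^ s) := by
  rw [airyKer, norm_mul, norm_exp_cube_line, Complex.norm_cpow_real, ← mul_assoc, ← Real.exp_add]
  congr 2
  ring

theorem continuous_airyKer_line {c : ℝ} (hc : 0 < c) (s : ℝ) :
    Continuous fun w : ℝ => airyKer s (c + w * Complex.I) :=
  Continuous.mul (by fun_prop) (continuous_line_cpow hc _)

theorem integrable_airyKer_line {c : ℝ} (hc : 0 < c) (s : ℝ) :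
    Integrable fun w : ℝ => airyKer s (c + w * Complex.I) := by
  refine ((integrable_gaussian_mul_norm_rpow hc hc s).const_mul (Real.exp (c ^ 3 / 3))).mono'
    (continuous_airyKer_line hc s).aestronglyMeasurable (Eventually.of_forall fun w => ?_)
  rw [norm_airyKer_line]

theorem integral_airyKer_line_eq {s : ℝ} (hs : s ≤ 0) {a b : ℝ} (ha : 0 < a) (hb : 0 < b) :
    ∫ w : ℝ, airyKer s (a + w * Complex.I) = ∫ w : ℝ, airyKer s (b + w * Complex.I) := by
  have hm : 0 < min a b := lt_min ha hb
  refine integral_line_eq (C := Real.exp (max a b ^ 3 / 3) * ((min a b)⁻¹ * min a b ^ s))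
    ?_ ha hb fun z hz hz1 => ?_
  · intro z hz
    refine DifferentiableAt.differentiableWithinAt ?_
    exact DifferentiableAt.mul (by fun_prop)
      (differentiableAt_id.cpow (differentiableAt_const _) (Or.inl hz))
  · obtain ⟨h1, h2⟩ := hz
    have hc : 0 < z.re := hm.trans_le h1
    have hw : 0 < z.im ^ 2 := by rw [← sq_abs]; positivity
    rw [← Complex.re_add_im z, norm_airyKer_line, im_line, mul_div_assoc]
    have e1 : Real.exp (z.re ^ 3 / 3) ≤ Real.exp (max a b ^ 3 / 3) := by gcongr
    have e2 : Real.exp (-z.re * z.im ^ 2) ≤ (min a b)⁻¹ / z.im ^ 2 := by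
      rw [neg_mul, Real.exp_neg, inv_div_left]
      refine inv_anti₀ (by positivity) ?_
      have := Real.add_one_le_exp (z.re * z.im ^ 2)
      have h3 : min a b * z.im ^ 2 ≤ z.re * z.im ^ 2 := mul_le_mul_of_nonneg_right h1 hw.le
      nlinarith
    have e3 : ‖(z.re : ℂ) + z.im * Complex.I‖ ^ s ≤ min a b ^ s :=
      Real.rpow_le_rpow_of_nonpos hm (h1.trans (le_norm_line _)) hs
    rw [mul_div_right_comm]
    gcongr

/-- Integration by parts: `airyKer (s + 3) + (s + 1) airyKer s` is the derivative of
`airyKer (s + 1)`. -/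
theorem integral_airyKer_add_three {c : ℝ} (hc : 0 < c) (s : ℝ) :
    ∫ w : ℝ, airyKer (s + 3) (c + w * Complex.I) =
      -(s + 1) * ∫ w : ℝ, airyKer s (c + w * Complex.I) := by
  have hder : ∀ w : ℝ, HasDerivAt (fun w : ℝ => airyKer (s + 1) (c + w * Complex.I))
      (Complex.I * (airyKer (s + 3) (c + w * Complex.I) +
        (s + 1) * airyKer s (c + w * Complex.I))) w := by
    intro w
    have hl : HasDerivAt (fun w : ℝ => (c : ℂ) + w * Complex.I) Complex.I w := by
      simpa using ((Complex.ofRealCLM.hasDerivAt (x := w)).mul_const Complex.I).const_add (c : ℂ)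
    have hne := line_ne_zero hc w
    have hmem := line_mem_slitPlane hc w
    have hK : HasDerivAt (airyKer (s + 1)) (airyKer (s + 3) (c + w * Complex.I) +
        (s + 1) * airyKer s (c + w * Complex.I)) (c + w * Complex.I) := by
      generalize (c : ℂ) + w * Complex.I = t at hne hmem
      have h1 : HasDerivAt (fun t : ℂ => Complex.exp (t ^ 3 / 3))
          (Complex.exp (t ^ 3 / 3) * t ^ 2) t := by
        have := ((hasDerivAt_pow 3 t).div_const 3).cexp
        refine this.congr_deriv ?_
        push_cast
        ring
      have h2 : HasDerivAt (fun t : ℂ => t ^ ((s + 1 : ℝ) : ℂ)) ((s + 1) * t ^ (s : ℂ)) t := by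
        have := (hasDerivAt_id t).cpow_const (c := ((s + 1 : ℝ) : ℂ)) hmem
        refine this.congr_deriv ?_
        push_cast
        simp
      have h3 : t ^ ((s + 3 : ℝ) : ℂ) = t ^ 2 * t ^ ((s + 1 : ℝ) : ℂ) := by
        rw [← Complex.cpow_ofNat, ← Complex.cpow_add _ _ hne]
        congr 1
        push_cast
        ring
      refine (h1.mul h2).congr_deriv ?_
      simp only [airyKer, h3]
      ring
    exact hK.scomp w hl
  have hi := integrable_airyKer_line hc (s + 3)
  have hj := (integrable_airyKer_line hc s).const_mul ((s : ℂ) + 1)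
  have h := integral_eq_zero_of_hasDerivAt_of_integrable hder
    ((hi.add hj).const_mul Complex.I) (integrable_airyKer_line hc (s + 1))
  rw [integral_const_mul, integral_add hi hj, integral_const_mul] at h
  have := (mul_eq_zero.mp h).resolve_left Complex.I_ne_zero
  linear_combination this

/-! ### The Hankel-type formula -/

theorem ofReal_mul_cpow' {r : ℝ} (hr : 0 < r) {z : ℂ} (hz : z ≠ 0) (s : ℝ) :
    ((r : ℂ) * z) ^ (s : ℂ) = ((r ^ s : ℝ) : ℂ) * z ^ (s : ℂ) := by
  have hr' : (r : ℂ) ≠ 0 := by exact_mod_cast hr.ne'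
  rw [Complex.cpow_def_of_ne_zero (mul_ne_zero hr' hz), Complex.log_ofReal_mul hr hz, add_mul,
    Complex.exp_add, ← Complex.cpow_def_of_ne_zero hz, Complex.ofReal_cpow hr.le,
    Complex.cpow_def_of_ne_zero hr', Complex.ofReal_log hr.le]

/-- With the line placed at `re t = ρ / 2`, where `ρ³ = 3x`, rescaling turns the kernel into
`exp (x τ³) τ ^ s` on the fixed line `re τ = 1/2`. -/
theorem integral_airyKer_scaled (s : ℝ) {x : ℝ} (hx : 0 < x) :
    ∫ w : ℝ, airyKer s (((3 * x) ^ (1 / 3 : ℝ) / 2 : ℝ) + w * Complex.I) =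
      (((3 * x) ^ ((1 + s) / 3) : ℝ) : ℂ) *
        ∫ w : ℝ, Complex.exp (x * ((1 / 2 : ℝ) + w * Complex.I) ^ 3) *
          ((1 / 2 : ℝ) + w * Complex.I) ^ (s : ℂ) := by
  set ρ : ℝ := (3 * x) ^ (1 / 3 : ℝ) with hρ
  have hρ0 : 0 < ρ := by positivity
  have hρ3 : ρ ^ 3 = 3 * x := by
    rw [hρ, ← Real.rpow_natCast, ← Real.rpow_mul (by positivity)]
    norm_num
  have hρs : ρ * ρ ^ s = (3 * x) ^ ((1 + s) / 3) := by
    rw [hρ, ← Real.rpow_mul (by positivity), ← Real.rpow_add (by positivity)]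
    congr 1
    ring
  have h := Measure.integral_comp_mul_left
    (fun w : ℝ => airyKer s ((ρ / 2 : ℝ) + w * Complex.I)) ρ
  have hpt : ∀ w : ℝ, airyKer s ((ρ / 2 : ℝ) + (ρ * w : ℝ) * Complex.I) =
      ((ρ ^ s : ℝ) : ℂ) * (Complex.exp (x * ((1 / 2 : ℝ) + w * Complex.I) ^ 3) *
          ((1 / 2 : ℝ) + w * Complex.I) ^ (s : ℂ)) := by
    intro w
    have hne := line_ne_zero (c := 1 / 2) (by norm_num) w
    have e : (((ρ / 2 : ℝ) : ℂ) + (ρ * w : ℝ) * Complex.I) =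
        ρ * ((1 / 2 : ℝ) + w * Complex.I) := by
      push_cast; ring
    rw [e, airyKer, ofReal_mul_cpow' hρ0 hne, mul_pow]
    have : (ρ : ℂ) ^ 3 = 3 * x := by exact_mod_cast hρ3
    rw [this, mul_assoc, mul_div_cancel_left₀ _ (by norm_num)]
    ring
  simp only [hpt] at h
  rw [integral_const_mul, abs_of_pos (by positivity), Complex.real_smul, Complex.ofReal_inv] at h
  have hρc : (ρ : ℂ) ≠ 0 := by exact_mod_cast hρ0.ne'
  rw [← hρs, Complex.ofReal_mul, mul_assoc, h, mul_inv_cancel_left₀ hρc]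

theorem re_one_sub_cube (w : ℝ) :
    (-(1 - ((1 / 2 : ℝ) + w * Complex.I) ^ 3) : ℂ).re = -(7 / 8 + 3 / 2 * w ^ 2) := by
  have : (-(1 - ((1 / 2 : ℝ) + w * Complex.I) ^ 3) : ℂ) =
      ((-(7 / 8 + 3 / 2 * w ^ 2) : ℝ) : ℂ) + ((3 / 4 * w - w ^ 3 : ℝ) : ℂ) * Complex.I := by
    push_cast
    linear_combination (3 / 2 * (w : ℂ) ^ 2 + w ^ 3 * Complex.I) * Complex.I_sq
  rw [this, re_line]

/-- Fubini: the real part of `1 - τ³` is at least `7/8` on `re τ = 1/2`, so the double integral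
converges absolutely. -/
theorem integral_exp_cube_swap {s : ℝ} (hs : s ≤ 0) :
    ∫ x in Set.Ioi (0 : ℝ), ∫ w : ℝ,
      Complex.exp (-(1 - ((1 / 2 : ℝ) + w * Complex.I) ^ 3) * x) *
        ((1 / 2 : ℝ) + w * Complex.I) ^ (s : ℂ) = ((2 * Real.pi / 3 : ℝ) : ℂ) := by
  have hneg : ∀ w : ℝ, (-(1 - ((1 / 2 : ℝ) + w * Complex.I) ^ 3) : ℂ).re < 0 := by
    intro w
    rw [re_one_sub_cube]
    nlinarith [sq_nonneg w]
  rw [← integral_cpow_div hs, integral_integral_swap]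
  · refine integral_congr_ae (Eventually.of_forall fun w => ?_)
    simp only
    rw [integral_mul_const, integral_exp_mul_complex_Ioi (hneg w)]
    simp only [Complex.ofReal_zero, mul_zero, Complex.exp_zero, neg_div_neg_eq]
    ring
  · have hcont : Continuous (Function.uncurry fun x w : ℝ =>
        Complex.exp (-(1 - ((1 / 2 : ℝ) + w * Complex.I) ^ 3) * x) *
        ((1 / 2 : ℝ) + w * Complex.I) ^ (s : ℂ)) := by
      refine Continuous.mul (by fun_prop) ?_
      exact (continuous_line_cpow (c := 1 / 2) (by norm_num) s).comp continuous_snd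
    rw [integrable_prod_iff' hcont.aestronglyMeasurable]
    refine ⟨Eventually.of_forall fun w => ?_, ?_⟩
    · exact (integrableOn_exp_mul_complex_Ioi (hneg w) 0).mul_const
        (((1 / 2 : ℝ) + w * Complex.I) ^ (s : ℂ))
    · have hval : ∀ w : ℝ, ∫ x in Set.Ioi (0 : ℝ), ‖Function.uncurry (fun x w : ℝ =>
          Complex.exp (-(1 - ((1 / 2 : ℝ) + w * Complex.I) ^ 3) * x) *
          ((1 / 2 : ℝ) + w * Complex.I) ^ (s : ℂ)) (x, w)‖ =
          (7 / 8 + 3 / 2 * w ^ 2)⁻¹ * ‖((1 / 2 : ℝ) : ℂ) + w * Complex.I‖ ^ s := by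
        intro w
        have hn : ∀ x : ℝ, ‖Function.uncurry (fun x w : ℝ =>
          Complex.exp (-(1 - ((1 / 2 : ℝ) + w * Complex.I) ^ 3) * x) *
          ((1 / 2 : ℝ) + w * Complex.I) ^ (s : ℂ)) (x, w)‖ =
          Real.exp (-(7 / 8 + 3 / 2 * w ^ 2) * x) * ‖((1 / 2 : ℝ) : ℂ) + w * Complex.I‖ ^ s := by
          intro x
          simp only [Function.uncurry_apply_pair]
          rw [norm_mul, Complex.norm_cpow_real, Complex.norm_exp, Complex.re_mul_ofReal,
            re_one_sub_cube]
        simp only [hn]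
        rw [integral_mul_const, integral_exp_mul_Ioi (by nlinarith [sq_nonneg w])]
        rw [mul_zero, Real.exp_zero, neg_div_neg_eq, one_div]
      simp only [hval]
      refine (integrable_inv_one_add_sq.const_mul (2 * (1 / 2 : ℝ) ^ s)).mono' ?_
        (Eventually.of_forall fun w => ?_)
      · refine Continuous.aestronglyMeasurable (Continuous.mul ?_ ?_)
        · exact Continuous.inv₀ (by fun_prop) fun w => by positivity
        · refine Continuous.rpow_const (by fun_prop) fun w => Or.inl ?_
          exact norm_ne_zero_iff.mpr (line_ne_zero (by norm_num) w)
      · rw [Real.norm_of_nonneg (by positivity)]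
        have h1 : ‖((1 / 2 : ℝ) : ℂ) + w * Complex.I‖ ^ s ≤ (1 / 2 : ℝ) ^ s :=
          Real.rpow_le_rpow_of_nonpos (by norm_num) (le_norm_line w) hs
        have h2 : (7 / 8 + 3 / 2 * w ^ 2)⁻¹ ≤ 2 * (1 + w ^ 2)⁻¹ := by
          rw [← inv_inv (2 : ℝ), ← mul_inv]
          refine inv_anti₀ (by positivity) ?_
          nlinarith [sq_nonneg w]
        calc _ ≤ 2 * (1 + w ^ 2)⁻¹ * (1 / 2 : ℝ) ^ s := by gcongr
          _ = _ := by ring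

/-- The Hankel-type formula for `s ≤ 0`: multiply by Euler's integral for `Γ ((2 - s) / 3)`,
let the line depend on the Euler variable, and exchange the integrals. -/
theorem integral_airyKer_of_nonpos {s : ℝ} (hs : s ≤ 0) {c : ℝ} (hc : 0 < c) :
    ∫ w : ℝ, airyKer s (c + w * Complex.I) =
      ((2 * Real.pi * (3 : ℝ) ^ ((s - 2) / 3) / Real.Gamma ((2 - s) / 3) : ℝ) : ℂ) := by
  set J := ∫ w : ℝ, airyKer s (c + w * Complex.I) with hJ
  have hq : 0 < (2 - s) / 3 := by linarith
  have hΓ := Real.Gamma_pos_of_pos hq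
  have hpt : ∀ x ∈ Set.Ioi (0 : ℝ),
      ((Real.exp (-x) * x ^ ((2 - s) / 3 - 1) : ℝ) : ℂ) * J =
      (((3 : ℝ) ^ ((1 + s) / 3) : ℝ) : ℂ) * ∫ w : ℝ,
        Complex.exp (-(1 - ((1 / 2 : ℝ) + w * Complex.I) ^ 3) * x) *
        ((1 / 2 : ℝ) + w * Complex.I) ^ (s : ℂ) := by
    intro x hx
    have hx : 0 < x := hx
    rw [hJ, integral_airyKer_line_eq hs hc (b := (3 * x) ^ (1 / 3 : ℝ) / 2) (by positivity),
      integral_airyKer_scaled s hx, ← mul_assoc, ← Complex.ofReal_mul]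
    have e1 : Real.exp (-x) * x ^ ((2 - s) / 3 - 1) * (3 * x) ^ ((1 + s) / 3) =
        (3 : ℝ) ^ ((1 + s) / 3) * Real.exp (-x) := by
      have : x ^ ((2 - s) / 3 - 1) * x ^ ((1 + s) / 3) = 1 := by
        rw [← Real.rpow_add hx]
        ring_nf
        simp
      rw [Real.mul_rpow (by norm_num) hx.le]
      linear_combination (Real.exp (-x) * (3 : ℝ) ^ ((1 + s) / 3)) * this
    rw [e1, Complex.ofReal_mul, mul_assoc, ← integral_const_mul]
    congr 2
    ext w
    rw [← mul_assoc, Complex.ofReal_exp, ← Complex.exp_add]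
    congr 2
    push_cast
    ring
  have h1 : (Real.Gamma ((2 - s) / 3) : ℂ) * J =
      (((3 : ℝ) ^ ((1 + s) / 3) : ℝ) : ℂ) * ((2 * Real.pi / 3 : ℝ) : ℂ) := by
    rw [← integral_exp_cube_swap hs, Real.Gamma_eq_integral hq, ← integral_complex_ofReal,
      ← integral_mul_const, ← integral_const_mul]
    exact setIntegral_congr_fun measurableSet_Ioi hpt
  have h3 : (3 : ℝ) ^ ((1 + s) / 3) = 3 * (3 : ℝ) ^ ((s - 2) / 3) := by
    rw [show (1 + s) / 3 = 1 + (s - 2) / 3 by ring, Real.rpow_add (by norm_num), Real.rpow_one]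
  have hΓc : (Real.Gamma ((2 - s) / 3) : ℂ) ≠ 0 := by exact_mod_cast hΓ.ne'
  rw [Complex.ofReal_div, eq_div_iff hΓc, mul_comm, h1, h3, ← Complex.ofReal_mul]
  congr 1
  ring

/-- The Hankel-type formula for all real `s`. The junk value `Γ = 0` at nonpositive integers gives
the right answer `0` on the right-hand side. -/
theorem integral_airyKer (s : ℝ) {c : ℝ} (hc : 0 < c) :
    ∫ w : ℝ, airyKer s (c + w * Complex.I) =
      ((2 * Real.pi * (3 : ℝ) ^ ((s - 2) / 3) / Real.Gamma ((2 - s) / 3) : ℝ) : ℂ) := by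
  obtain ⟨n, hn⟩ := exists_nat_ge (s / 3)
  have hn' : s ≤ 3 * n := by linarith
  clear hn
  induction n generalizing s with
  | zero => exact integral_airyKer_of_nonpos (by simpa using hn') hc
  | succ n ih =>
    have h := ih (s - 3) (by push_cast at hn'; linarith)
    have hrec := integral_airyKer_add_three hc (s - 3)
    rw [sub_add_cancel] at hrec
    rw [hrec, h]
    have e3 : (3 : ℝ) ^ ((s - 2) / 3) = 3 * (3 : ℝ) ^ ((s - 3 - 2) / 3) := by
      rw [show (s - 2) / 3 = 1 + (s - 3 - 2) / 3 by ring, Real.rpow_add (by norm_num),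
        Real.rpow_one]
    have eΓ : (2 - (s - 3)) / 3 = (2 - s) / 3 + 1 := by ring
    rw [eΓ, e3]
    have key : -(s - 3 + 1) * (2 * Real.pi * (3 : ℝ) ^ ((s - 3 - 2) / 3) /
        Real.Gamma ((2 - s) / 3 + 1)) =
        2 * Real.pi * (3 * (3 : ℝ) ^ ((s - 3 - 2) / 3)) / Real.Gamma ((2 - s) / 3) := by
      -- At `s = 2` both sides vanish, because of the factor `2 - s` and since `Γ 0 = 0`.
      rcases eq_or_ne s 2 with rfl | hs
      · norm_num [Real.Gamma_zero]
      · have hq : (2 - s) / 3 ≠ 0 := by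
          intro h0; apply hs; linarith
        rw [Real.Gamma_add_one hq, ← mul_div_assoc,
          ← mul_div_mul_left (2 * Real.pi * (3 * (3 : ℝ) ^ ((s - 3 - 2) / 3)))
            (Real.Gamma ((2 - s) / 3)) hq]
        congr 1
        ring
    rw [← key]
    push_cast
    ring

/-! ### The saddle-point representation of `AiryA` -/

/-- Expanding `exp (-(m/2) t²)` under the integral sign on the line `re t = m`. The exchange is
legitimate because `|exp (t³ / 3)|` decays like `exp (-m w²)` there while the exponential series
only costs `exp (m w² / 2)`. -/
theorem hasSum_integral_airyKer (y : ℝ) {m : ℝ} (hm : 0 < m) :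
    HasSum (fun k : ℕ => ∫ w : ℝ, ((-(m / 2)) ^ k / k.factorial : ℂ) *
        airyKer (2 * k + 1 - y) (m + w * Complex.I))
      (∫ w : ℝ, Complex.exp (-(m / 2) * ((m : ℂ) + w * Complex.I) ^ 2) *
        airyKer (1 - y) (m + w * Complex.I)) := by
  have hpow : ∀ (k : ℕ) (w : ℝ), ((-(m / 2)) ^ k / k.factorial : ℂ) *
      airyKer (2 * k + 1 - y) (m + w * Complex.I) =
      (-(m / 2) * ((m : ℂ) + w * Complex.I) ^ 2) ^ k / k.factorial *
        airyKer (1 - y) (m + w * Complex.I) := by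
    intro k w
    have hne := line_ne_zero hm w
    generalize (m : ℂ) + w * Complex.I = t at hne
    have : t ^ ((2 * k + 1 - y : ℝ) : ℂ) = (t ^ 2) ^ k * t ^ ((1 - y : ℝ) : ℂ) := by
      rw [← pow_mul, ← Complex.cpow_natCast, ← Complex.cpow_add _ _ hne]
      congr 1
      push_cast
      ring
    rw [airyKer, airyKer, this, mul_pow]
    ring
  have hexp : ∀ x : ℝ, HasSum (fun k : ℕ => x ^ k / k.factorial) (Real.exp x) := by
    intro x
    rw [Real.exp_eq_exp_ℝ]
    exact NormedSpace.expSeries_div_hasSum_exp x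
  set A : ℝ → ℝ := fun w => m / 2 * (m ^ 2 + w ^ 2) with hA
  set N : ℝ → ℝ := fun w => ‖airyKer (1 - y) (m + w * Complex.I)‖ with hN
  have hnorm : ∀ w : ℝ, ‖-((m : ℂ) / 2) * ((m : ℂ) + w * Complex.I) ^ 2‖ = A w := by
    intro w
    rw [norm_mul, norm_pow, normSq_line, norm_neg, norm_div, Complex.norm_real,
      Real.norm_of_nonneg hm.le]
    simp [hA]
  have hsum : ∀ w : ℝ, HasSum (fun k : ℕ => A w ^ k / k.factorial * N w)
      (Real.exp (A w) * N w) := fun w => (hexp (A w)).mul_right _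
  refine hasSum_integral_of_dominated_convergence
    (fun k w => A w ^ k / k.factorial * N w) ?_ ?_ ?_ ?_ ?_
  · intro k
    exact ((continuous_airyKer_line hm _).const_mul _).aestronglyMeasurable
  · intro k
    refine Eventually.of_forall fun w => ?_
    rw [hpow, norm_mul, norm_div, norm_pow, hnorm]
    simp [hN]
  · exact Eventually.of_forall fun w => (hsum w).summable
  · simp only [(hsum _).tsum_eq]
    refine ((integrable_gaussian_mul_norm_rpow hm (half_pos hm) (1 - y)).const_mul
      (Real.exp (m ^ 3 / 3) * Real.exp (m / 2 * m ^ 2))).congr (Eventually.of_forall fun w => ?_)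
    simp only [hN, norm_airyKer_line, hA]
    have : Real.exp (m / 2 * (m ^ 2 + w ^ 2)) * Real.exp (-m * w ^ 2) =
        Real.exp (m / 2 * m ^ 2) * Real.exp (-(m / 2) * w ^ 2) := by
      rw [← Real.exp_add, ← Real.exp_add]
      congr 1
      ring
    linear_combination (-Real.exp (m ^ 3 / 3) * ‖(m : ℂ) + w * Complex.I‖ ^ (1 - y)) * this
  · refine Eventually.of_forall fun w => ?_
    simp only [hpow]
    refine HasSum.mul_right _ ?_
    rw [Complex.exp_eq_exp_ℂ]
    exact NormedSpace.expSeries_div_hasSum_exp _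

theorem exp_cube_saddle (m w : ℝ) :
    Complex.exp (-(m / 2) * ((m : ℂ) + w * Complex.I) ^ 2) *
      Complex.exp (((m : ℂ) + w * Complex.I) ^ 3 / 3) =
    ((Real.exp (-m ^ 3 / 6) : ℝ) : ℂ) *
      Complex.exp (-(m * w ^ 2 / 2 : ℝ) - (w ^ 3 / 3 : ℝ) * Complex.I) := by
  rw [Complex.ofReal_exp, ← Complex.exp_add, ← Complex.exp_add]
  congr 1
  push_cast
  linear_combination ((m : ℂ) * w ^ 2 / 2 + w ^ 3 / 3 * Complex.I) * Complex.I_sq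

/-- Steepest-descent representation: the critical point of `t³ / 3 - m t² / 2` is `t = m`, and the
value `-m³ / 6` there cancels the prefactor of `AiryA`. -/
theorem AiryA_neg_eq_integral (y : ℝ) {m : ℝ} (hm : 0 < m) :
    ((2 * Real.pi * AiryA y (-m) : ℝ) : ℂ) =
      ∫ w : ℝ, Complex.exp (-(m * w ^ 2 / 2 : ℝ) - (w ^ 3 / 3 : ℝ) * Complex.I) *
        ((m : ℂ) + w * Complex.I) ^ ((1 - y : ℝ) : ℂ) := by
  have h := hasSum_integral_airyKer y hm
  have hterm : ∀ k : ℕ, ∫ w : ℝ, ((-(m / 2)) ^ k / k.factorial : ℂ) *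
        airyKer (2 * k + 1 - y) (m + w * Complex.I) =
      ((2 * Real.pi / (3 : ℝ) ^ ((y + 1) / 3) *
        (((1 / 2) * (3 : ℝ) ^ (2 / 3 : ℝ) * (-m)) ^ k /
      ((k.factorial : ℝ) * Real.Gamma ((y + 1 - 2 * k) / 3))) : ℝ) : ℂ) := by
    intro k
    rw [integral_const_mul, integral_airyKer _ hm]
    have e1 : (3 : ℝ) ^ ((2 * k + 1 - y - 2) / 3) =
        ((3 : ℝ) ^ (2 / 3 : ℝ)) ^ k / (3 : ℝ) ^ ((y + 1) / 3) := by
      rw [← Real.rpow_natCast, ← Real.rpow_mul (by norm_num), ← Real.rpow_sub (by norm_num)]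
      congr 1
      ring
    have e2 : (2 - (2 * k + 1 - y)) / 3 = (y + 1 - 2 * k) / 3 := by ring
    have e3 : (1 / 2 * (3 : ℝ) ^ (2 / 3 : ℝ) * (-m)) ^ k =
        ((3 : ℝ) ^ (2 / 3 : ℝ)) ^ k * (-(m / 2)) ^ k := by
      rw [← mul_pow]; ring
    rw [e1, e2, e3]
    have e4 : ((-(m / 2)) ^ k / k.factorial : ℂ) = (((-(m / 2)) ^ k / k.factorial : ℝ) : ℂ) := by
      push_cast; rfl
    rw [e4, ← Complex.ofReal_mul]
    congr 1
    generalize ((3 : ℝ) ^ (2 / 3 : ℝ)) ^ k = a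
    simp only [div_eq_mul_inv, mul_inv]
    ring
  simp only [hterm] at h
  have h1 := h.tsum_eq
  rw [← Complex.ofReal_tsum, tsum_mul_left] at h1
  have h2 : 2 * Real.pi * AiryA y (-m) = Real.exp (m ^ 3 / 6) *
      (2 * Real.pi / (3 : ℝ) ^ ((y + 1) / 3) * ∑' k : ℕ,
        (((1 / 2) * (3 : ℝ) ^ (2 / 3 : ℝ) * (-m)) ^ k /
      ((k.factorial : ℝ) * Real.Gamma ((y + 1 - 2 * k) / 3)))) := by
    rw [AiryA, show -(-m) ^ 3 / 6 = m ^ 3 / 6 by ring]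
    ring
  rw [h2, Complex.ofReal_mul, h1, ← integral_const_mul]
  congr 1
  ext w
  have h3 : ((Real.exp (m ^ 3 / 6) : ℝ) : ℂ) * ((Real.exp (-m ^ 3 / 6) : ℝ) : ℂ) = 1 := by
    rw [← Complex.ofReal_mul, ← Real.exp_add]
    ring_nf
    simp
  rw [airyKer, ← mul_assoc _ (Complex.exp _) (_ ^ _), exp_cube_saddle, ← mul_assoc,
    ← mul_assoc, h3, one_mul]

/-! ### The limit -/

/-- The integral obtained from the saddle-point representation by `w = m ^ (-1/2) u`; the small
parameter is `h = m ^ (-3/2)`. -/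
noncomputable def scaledIntegral (y h : ℝ) : ℂ :=
  ∫ u : ℝ, Complex.exp (-(u ^ 2 / 2 : ℝ) - (h * u ^ 3 / 3 : ℝ) * Complex.I) *
    ((1 : ℝ) + (h * u : ℝ) * Complex.I) ^ ((1 - y : ℝ) : ℂ)

theorem AiryA_neg_mul_rpow (y : ℝ) {m : ℝ} (hm : 0 < m) :
    ((2 * Real.pi * (AiryA y (-m) * m ^ (y - 1 / 2)) : ℝ) : ℂ) =
      scaledIntegral y (m ^ (-(3 / 2) : ℝ)) := by
  set a : ℝ := m ^ (-(1 / 2) : ℝ) with ha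
  set h : ℝ := m ^ (-(3 / 2) : ℝ) with hh
  have ha0 : 0 < a := by positivity
  have ha2 : m * a ^ 2 = 1 := by
    rw [ha, ← Real.rpow_natCast, ← Real.rpow_mul hm.le]
    norm_num
    rw [Real.rpow_neg_one, mul_inv_cancel₀ hm.ne']
  have hmh : m * h = a := by
    rw [ha, hh]
    nth_rewrite 1 [← Real.rpow_one m]
    rw [← Real.rpow_add hm]
    norm_num
  have ha3 : a ^ 3 = h := by
    have : m * a ^ 3 = m * h := by rw [hmh]; linear_combination a * ha2
    exact mul_left_cancel₀ hm.ne' this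
  have hms : m ^ (y - 1 / 2) * (a * m ^ (1 - y)) = 1 := by
    rw [ha, ← Real.rpow_add hm, ← Real.rpow_add hm]
    ring_nf
    simp
  have hI := Measure.integral_comp_mul_left (fun w : ℝ =>
    Complex.exp (-(m * w ^ 2 / 2 : ℝ) - (w ^ 3 / 3 : ℝ) * Complex.I) *
        ((m : ℂ) + w * Complex.I) ^ ((1 - y : ℝ) : ℂ)) a
  have hpt : ∀ u : ℝ,
      Complex.exp (-(m * (a * u) ^ 2 / 2 : ℝ) - ((a * u) ^ 3 / 3 : ℝ) * Complex.I) *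
        ((m : ℂ) + (a * u : ℝ) * Complex.I) ^ ((1 - y : ℝ) : ℂ) =
      ((m ^ (1 - y) : ℝ) : ℂ) *
      (Complex.exp (-(u ^ 2 / 2 : ℝ) - (h * u ^ 3 / 3 : ℝ) * Complex.I) *
    ((1 : ℝ) + (h * u : ℝ) * Complex.I) ^ ((1 - y : ℝ) : ℂ)) := by
    intro u
    have e1 : m * (a * u) ^ 2 / 2 = u ^ 2 / 2 := by linear_combination u ^ 2 / 2 * ha2
    have e2 : (a * u) ^ 3 / 3 = h * u ^ 3 / 3 := by linear_combination u ^ 3 / 3 * ha3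
    have e3 : (m : ℂ) + (a * u : ℝ) * Complex.I = m * ((1 : ℝ) + (h * u : ℝ) * Complex.I) := by
      rw [← hmh]; push_cast; ring
    rw [e1, e2, e3, ofReal_mul_cpow' hm (line_ne_zero one_pos _)]
    ring
  simp only [hpt] at hI
  rw [integral_const_mul, ← AiryA_neg_eq_integral y hm, abs_of_pos (by positivity),
    Complex.real_smul] at hI
  change _ * scaledIntegral y h = _ at hI
  have hac : (a : ℂ) ≠ 0 := by exact_mod_cast ha0.ne'
  have hmsc : ((m ^ (y - 1 / 2) : ℝ) : ℂ) * (a * ((m ^ (1 - y) : ℝ) : ℂ)) = 1 := by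
    exact_mod_cast hms
  have hI2 : ((2 * Real.pi * AiryA y (-m) : ℝ) : ℂ) =
      a * (((m ^ (1 - y) : ℝ) : ℂ) * scaledIntegral y h) := by
    rw [hI, Complex.ofReal_inv, mul_inv_cancel_left₀ hac]
  rw [← mul_assoc, Complex.ofReal_mul, hI2]
  linear_combination scaledIntegral y h * hmsc

/-- Dominated convergence as the small parameter tends to zero. -/
theorem tendsto_scaledIntegral (y : ℝ) :
    Tendsto (scaledIntegral y) (𝓝[>] 0) (𝓝 ((√(2 * Real.pi) : ℝ) : ℂ)) := by
  have hlim : ∫ u : ℝ, ((Real.exp (-(1 / 2) * u ^ 2) : ℝ) : ℂ) = ((√(2 * Real.pi) : ℝ) : ℂ) := by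
    rw [integral_complex_ofReal, integral_gaussian]
    congr 2
    ring
  rw [← hlim]
  obtain ⟨C, hC0, hC⟩ := rpow_le_const_mul_exp_sq one_pos (ε := 1 / 4) (by norm_num) (1 - y)
  refine tendsto_integral_filter_of_dominated_convergence
    (fun u => C * Real.exp (1 / 4) * Real.exp (-(1 / 4) * u ^ 2)) ?_ ?_ ?_ ?_
  · refine Eventually.of_forall fun h => Continuous.aestronglyMeasurable ?_
    exact Continuous.mul (by fun_prop)
      ((continuous_line_cpow one_pos _).comp (continuous_const.mul continuous_id))
  · filter_upwards [Ioo_mem_nhdsGT (zero_lt_one' ℝ)] with h hh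
    refine Eventually.of_forall fun u => ?_
    have hnb := hC _ (le_norm_line (c := 1) (h * u))
    rw [normSq_line] at hnb
    have hre : (-(u ^ 2 / 2 : ℝ) - (h * u ^ 3 / 3 : ℝ) * Complex.I : ℂ).re = -(u ^ 2 / 2) := by
      rw [Complex.sub_re, Complex.re_ofReal_mul, Complex.I_re, mul_zero, sub_zero,
        ← Complex.ofReal_neg, Complex.ofReal_re]
    rw [norm_mul, Complex.norm_cpow_real, Complex.norm_exp, hre]
    have hh2 : (h * u) ^ 2 ≤ u ^ 2 := by
      rw [mul_pow]
      exact mul_le_of_le_one_left (sq_nonneg _) (pow_le_one₀ hh.1.le hh.2.le)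
    calc _ ≤ Real.exp (-(u ^ 2 / 2)) * (C * Real.exp (1 / 4 * (1 ^ 2 + u ^ 2))) := by
          refine mul_le_mul_of_nonneg_left (hnb.trans ?_) (Real.exp_nonneg _)
          gcongr
      _ = C * (Real.exp (-(u ^ 2 / 2)) * Real.exp (1 / 4 * (1 ^ 2 + u ^ 2))) := by ring
      _ = C * (Real.exp (1 / 4) * Real.exp (-(1 / 4) * u ^ 2)) := by
          rw [← Real.exp_add, ← Real.exp_add]; congr 2; ring
      _ = _ := by ring
  · exact (integrable_exp_neg_mul_sq (by norm_num)).const_mul _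
  · refine Eventually.of_forall fun u => ?_
    have hcont : ContinuousAt (fun h : ℝ =>
        Complex.exp (-(u ^ 2 / 2 : ℝ) - (h * u ^ 3 / 3 : ℝ) * Complex.I) *
        ((1 : ℝ) + (h * u : ℝ) * Complex.I) ^ ((1 - y : ℝ) : ℂ)) 0 := by
      refine Continuous.continuousAt (Continuous.mul (by fun_prop) ?_)
      exact (continuous_line_cpow one_pos _).comp (continuous_id.mul continuous_const)
    have h0 := hcont.tendsto
    simp only [zero_mul, zero_div, Complex.ofReal_zero, sub_zero, add_zero, Complex.ofReal_one,
      Complex.one_cpow, mul_one] at h0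
    have e : Complex.exp (-(u ^ 2 / 2 : ℝ)) = ((Real.exp (-(1 / 2) * u ^ 2) : ℝ) : ℂ) := by
      rw [Complex.ofReal_exp]; congr 1; push_cast; ring
    rw [e] at h0
    simpa using h0.mono_left nhdsWithin_le_nhds

/-- for any fixed real `y`,
`lim_{μ → −∞} A(y,μ)·|μ|^{y−1/2} = 1/√(2π)`. -/
theorem AiryA_atBot (y : ℝ) :
    Tendsto (fun μ : ℝ => AiryA y μ * |μ| ^ (y - 1 / 2)) atBot
      (nhds (1 / Real.sqrt (2 * Real.pi))) := by
  have hh : Tendsto (fun μ : ℝ => (-μ) ^ (-(3 / 2) : ℝ)) atBot (𝓝[>] 0) := by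
    refine tendsto_nhdsWithin_iff.mpr ⟨?_, ?_⟩
    · exact (tendsto_rpow_neg_atTop (by norm_num)).comp tendsto_neg_atBot_atTop
    · filter_upwards [eventually_lt_atBot 0] with μ hμ
      exact Real.rpow_pos_of_pos (by linarith) _
  have h1 := (tendsto_scaledIntegral y).comp hh
  have h2 := (Complex.continuous_re.tendsto _).comp h1
  have h3 := h2.div_const (2 * Real.pi)
  have hπ := Real.pi_pos
  have e : (((√(2 * Real.pi) : ℝ) : ℂ)).re / (2 * Real.pi) = 1 / √(2 * Real.pi) := by
    rw [Complex.ofReal_re, Real.sqrt_div_self']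
  rw [e] at h3
  refine h3.congr' ?_
  filter_upwards [eventually_lt_atBot 0] with μ hμ
  have h4 := AiryA_neg_mul_rpow y (m := -μ) (by linarith)
  simp only [Function.comp_apply]
  rw [← h4, Complex.ofReal_re, neg_neg, abs_of_neg hμ]
  field_simp
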